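/- Fix τ ∈ ℝ and define m_τ : ℝ → ℝ by m_τ(θ) = τ·(27 + 20cos θ + cos 2θ)/48 + (1 − τ)·(33 + 26cos θ + cos 2θ)/60, k(θ) = (3 − 2cos θ − cos 2θ)/3, and G_τ(θ) = √(k(θ)/m_τ(θ)). Then, as θ → 0, G_τ(θ) = θ + (2 − 3τ)·θ⁵/2880 + O(θ⁷); that is, the function θ ↦ G_τ(θ) − θ − (2 − 3τ)θ⁵/2880 is O(θ⁷) in a neighborhood of 0. -/

import Mathlib

open Real Filter Asymptotics Topology

/-!
Write `c = (2 - 3τ) / 2880` and `P θ = θ + c θ ^ 5`. The Taylor expansions of the symbols,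
`k = θ² - θ⁴/4 + 11θ⁶/360 + O(θ⁸)` and `m_τ = 1 - θ²/4 + (14 + τ)θ⁴/480 + O(θ⁶)`, give
`k - m_τ P² = O(θ⁸)`: the coefficient of `θ⁶` vanishes precisely for this value of `c`. Since
`m_τ → 1`, also `k / m_τ - P² = O(θ⁸)`, and passing to the square root divides the error by `P ~ θ`.
-/

theorem abs_sqrt_sub_mul_le_abs_sub_sq (x : ℝ) {y : ℝ} (hy : 0 ≤ y) :
    |√x - y| * y ≤ |x - y ^ 2| := by
  rcases le_total 0 x with hx | hx
  · have factorization : x - y ^ 2 = (√x - y) * (√x + y) := by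
      linear_combination -sq_sqrt hx
    rw [factorization, abs_mul, abs_of_nonneg (add_nonneg (sqrt_nonneg x) hy)]
    gcongr
    exact le_add_of_nonneg_left (sqrt_nonneg x)
  · rw [sqrt_eq_zero_of_nonpos hx, zero_sub, abs_neg, abs_of_nonneg hy,
      abs_of_nonpos (by nlinarith)]
    linarith

theorem isBigO_sqrt_sub_of_isBigO_sub_sq {α : Type*} {l : Filter α} {f g u : α → ℝ}
    (hg : ∀ᶠ x in l, 0 < g x) (h : (fun x => f x - g x ^ 2) =O[l] fun x => u x * g x) :
    (fun x => √(f x) - g x) =O[l] u := by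
  obtain ⟨C, hC⟩ := h.bound
  refine .of_bound C ?_
  filter_upwards [hg, hC] with x hgx hCx
  refine le_of_mul_le_mul_right ?_ hgx
  calc ‖√(f x) - g x‖ * g x ≤ ‖f x - g x ^ 2‖ := abs_sqrt_sub_mul_le_abs_sub_sq _ hgx.le
    _ ≤ C * ‖u x * g x‖ := hCx
    _ = C * ‖u x‖ * g x := by rw [norm_mul, norm_of_nonneg hgx.le, mul_assoc]

theorem isBigO_pow_comp_mul_left {𝕜 E : Type*} [NormedField 𝕜] [Norm E] {f : 𝕜 → E} {n : ℕ}
    (hf : f =O[𝓝 0] (· ^ n)) (a : 𝕜) :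
    (fun x => f (a * x)) =O[𝓝 0] (· ^ n) := by
  have ha : Tendsto (fun x => a * x) (𝓝 0) (𝓝 0) :=
    (continuous_const_mul a).tendsto' 0 0 (mul_zero a)
  refine (hf.comp_tendsto ha).trans ?_
  simpa only [Function.comp_def, mul_pow] using
    (isBigO_refl (fun x : 𝕜 => x ^ n) (𝓝 0)).const_mul_left (a ^ n)

section CosineTaylor

open scoped Nat

theorem sum_range_mul_I_pow_add_sum_range_neg_mul_I_pow (z : ℂ) (n : ℕ) :
    ∑ i ∈ Finset.range (2 * n), (z * Complex.I) ^ i / i ! +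
        ∑ i ∈ Finset.range (2 * n), (-z * Complex.I) ^ i / i ! =
      2 * ∑ i ∈ Finset.range n, (-1) ^ i * z ^ (2 * i) / (2 * i)! := by
  induction n with
  | zero => simp
  | succ n ih =>
    have even_term : (z * Complex.I) ^ (2 * n) = (-1) ^ n * z ^ (2 * n) := by
      rw [mul_pow, pow_mul Complex.I, Complex.I_sq, mul_comm]
    have even_symm : (-z * Complex.I) ^ (2 * n) = (z * Complex.I) ^ (2 * n) := by
      rw [neg_mul, (even_two_mul n).neg_pow]
    have odd_symm : (-z * Complex.I) ^ (2 * n + 1) = -(z * Complex.I) ^ (2 * n + 1) := by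
      rw [neg_mul, (odd_two_mul_add_one n).neg_pow]
    rw [mul_add_one 2 n, Finset.sum_range_succ _ n, mul_add, ← ih]
    simp only [Finset.sum_range_succ, even_symm, odd_symm, even_term]
    ring

theorem complex_cos_sub_sum_range_isBigO_pow (n : ℕ) :
    (fun z : ℂ => Complex.cos z - ∑ i ∈ Finset.range n, (-1) ^ i * z ^ (2 * i) / (2 * i)!)
      =O[𝓝 0] (· ^ (2 * n)) := by
  have exp_remainder (w : ℂ) :=
    isBigO_pow_comp_mul_left (Complex.exp_sub_sum_range_isBigO_pow (2 * n)) w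
  refine (((exp_remainder Complex.I).add (exp_remainder (-Complex.I))).const_mul_left
    (1 / 2)).congr_left fun z => ?_
  have hsum := sum_range_mul_I_pow_add_sum_range_neg_mul_I_pow z n
  simp only [neg_mul, mul_comm z Complex.I] at hsum ⊢
  rw [Complex.cos, neg_mul, mul_comm z]
  linear_combination (-1 / 2) * hsum

theorem cos_sub_sum_range_isBigO_pow (n : ℕ) :
    (fun x : ℝ => cos x - ∑ i ∈ Finset.range n, (-1) ^ i * x ^ (2 * i) / (2 * i)!)
      =O[𝓝 0] (· ^ (2 * n)) := by
  have h := (complex_cos_sub_sum_range_isBigO_pow n).comp_tendsto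
    (Complex.continuous_ofReal.tendsto' 0 0 rfl)
  refine Complex.isBigO_ofReal_left.mp (Complex.isBigO_ofReal_right.mp ?_)
  simpa [Function.comp_def] using h

theorem mul_cos_add_mul_cos_mul_sub_sum_range_isBigO_pow (a b c : ℝ) (n : ℕ) :
    (fun x : ℝ => a * cos x + b * cos (c * x) -
        ∑ i ∈ Finset.range n, (-1) ^ i * (a + b * c ^ (2 * i)) * x ^ (2 * i) / (2 * i)!)
      =O[𝓝 0] (· ^ (2 * n)) := by
  have hcos := cos_sub_sum_range_isBigO_pow n
  refine ((hcos.const_mul_left a).add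
    ((isBigO_pow_comp_mul_left hcos c).const_mul_left b)).congr_left fun x => ?_
  have hsum : ∑ i ∈ Finset.range n, (-1) ^ i * (a + b * c ^ (2 * i)) * x ^ (2 * i) / (2 * i)! =
      a * ∑ i ∈ Finset.range n, (-1) ^ i * x ^ (2 * i) / (2 * i)! +
        b * ∑ i ∈ Finset.range n, (-1) ^ i * (c * x) ^ (2 * i) / (2 * i)! := by
    rw [Finset.mul_sum, Finset.mul_sum, ← Finset.sum_add_distrib]
    refine Finset.sum_congr rfl fun i _ => ?_
    rw [mul_pow c x]
    ring
  rw [hsum]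
  ring

end CosineTaylor

/-- The Fourier symbol `k` of the exactly integrated quadratic B-spline stiffness matrix, scaled by
the mesh size `h`. -/
noncomputable def stiffnessSymbol (θ : ℝ) : ℝ :=
  (3 - 2 * cos θ - cos (2 * θ)) / 3

/-- The Fourier symbol of the quadratic B-spline mass matrix `M_GLL` integrated with the 3-point
Gauss–Lobatto–Legendre rule, scaled by `1 / h`. -/
noncomputable def lobattoMassSymbol (θ : ℝ) : ℝ :=
  (27 + 20 * cos θ + cos (2 * θ)) / 48

/-- The Fourier symbol of the exactly (Gauss) integrated quadratic B-spline mass matrix `M_G`,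
scaled by `1 / h`. -/
noncomputable def gaussMassSymbol (θ : ℝ) : ℝ :=
  (33 + 26 * cos θ + cos (2 * θ)) / 60

/-- The Fourier symbol `m_τ` of the blended mass matrix `τ M_GLL + (1 - τ) M_G`, scaled by
`1 / h`. -/
noncomputable def blendedMassSymbol (τ θ : ℝ) : ℝ :=
  τ * lobattoMassSymbol θ + (1 - τ) * gaussMassSymbol θ

/-- The discrete frequency `G_τ θ = ωʰ h` of the Fourier mode with normalized wavenumber `θ`; real
division and `√` make it `0` wherever `m_τ θ ≤ 0`, which does not happen near `θ = 0`. -/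
noncomputable def discreteFrequency (τ θ : ℝ) : ℝ :=
  √(stiffnessSymbol θ / blendedMassSymbol τ θ)

/-- The Taylor polynomial `P` of degree five of the discrete frequency `G_τ` at `θ = 0⁺`. -/
noncomputable def frequencyPolynomial (τ θ : ℝ) : ℝ :=
  θ + (2 - 3 * τ) * θ ^ 5 / 2880

theorem stiffnessSymbol_sub_taylor_isBigO :
    (fun θ => stiffnessSymbol θ - (θ ^ 2 - θ ^ 4 / 4 + 11 * θ ^ 6 / 360)) =O[𝓝 0] (· ^ 8) := by
  refine (mul_cos_add_mul_cos_mul_sub_sum_range_isBigO_pow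
    (-2 / 3) (-1 / 3) 2 4).congr_left fun θ => ?_
  simp only [stiffnessSymbol, Finset.sum_range_succ, Finset.sum_range_zero, Nat.factorial]
  push_cast
  ring

theorem lobattoMassSymbol_sub_taylor_isBigO :
    (fun θ => lobattoMassSymbol θ - (1 - θ ^ 2 / 4 + θ ^ 4 / 32)) =O[𝓝 0] (· ^ 6) := by
  refine (mul_cos_add_mul_cos_mul_sub_sum_range_isBigO_pow
    (20 / 48) (1 / 48) 2 3).congr_left fun θ => ?_
  simp only [lobattoMassSymbol, Finset.sum_range_succ, Finset.sum_range_zero, Nat.factorial]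
  push_cast
  ring

theorem gaussMassSymbol_sub_taylor_isBigO :
    (fun θ => gaussMassSymbol θ - (1 - θ ^ 2 / 4 + 7 * θ ^ 4 / 240)) =O[𝓝 0] (· ^ 6) := by
  refine (mul_cos_add_mul_cos_mul_sub_sum_range_isBigO_pow
    (26 / 60) (1 / 60) 2 3).congr_left fun θ => ?_
  simp only [gaussMassSymbol, Finset.sum_range_succ, Finset.sum_range_zero, Nat.factorial]
  push_cast
  ring

theorem blendedMassSymbol_sub_taylor_isBigO (τ : ℝ) :
    (fun θ => blendedMassSymbol τ θ - (1 - θ ^ 2 / 4 + (14 + τ) * θ ^ 4 / 480))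
      =O[𝓝 0] (· ^ 6) := by
  refine ((lobattoMassSymbol_sub_taylor_isBigO.const_mul_left τ).add
    (gaussMassSymbol_sub_taylor_isBigO.const_mul_left (1 - τ))).congr_left fun θ => ?_
  rw [blendedMassSymbol]
  ring

theorem tendsto_blendedMassSymbol_zero (τ : ℝ) :
    Tendsto (blendedMassSymbol τ) (𝓝 0) (𝓝 1) := by
  have hcont : Continuous (blendedMassSymbol τ) := by
    unfold blendedMassSymbol lobattoMassSymbol gaussMassSymbol
    fun_prop
  refine hcont.tendsto' 0 1 ?_
  norm_num [blendedMassSymbol, lobattoMassSymbol, gaussMassSymbol]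

theorem frequencyPolynomial_isEquivalent (τ : ℝ) :
    frequencyPolynomial τ ~[𝓝 0] fun θ => θ := by
  have h : (fun θ : ℝ => (2 - 3 * τ) / 2880 * θ ^ 5) =o[𝓝 0] fun θ => θ :=
    (isLittleO_pow_id (by norm_num)).const_mul_left _
  refine h.congr_left fun θ => ?_
  simp only [frequencyPolynomial, Pi.sub_apply]
  ring

theorem sub_mul_sq_add_mul_pow_five_isBigO {𝕜 : Type*} [NormedField 𝕜] (a b c : 𝕜) :
    (fun x : 𝕜 => x ^ 2 + a * x ^ 4 + (b + 2 * c) * x ^ 6 -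
        (1 + a * x ^ 2 + b * x ^ 4) * (x + c * x ^ 5) ^ 2)
      =O[𝓝 0] (· ^ 8) := by
  have hquot : Continuous fun x : 𝕜 =>
      -(2 * a * c + (2 * b * c + c ^ 2) * x ^ 2 + a * c ^ 2 * x ^ 4 + b * c ^ 2 * x ^ 6) := by
    fun_prop
  exact ((isBigO_refl (fun x : 𝕜 => x ^ 8) (𝓝 0)).mul ((hquot.tendsto 0).isBigO_one 𝕜)).congr
    (fun x => by ring) (fun x => mul_one _)

theorem stiffnessSymbol_sub_blendedMassSymbol_mul_sq_isBigO (τ : ℝ) :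
    (fun θ => stiffnessSymbol θ - blendedMassSymbol τ θ * frequencyPolynomial τ θ ^ 2)
      =O[𝓝 0] (· ^ 8) := by
  have hmass : (fun θ => (blendedMassSymbol τ θ - (1 - θ ^ 2 / 4 + (14 + τ) * θ ^ 4 / 480)) *
      frequencyPolynomial τ θ ^ 2) =O[𝓝 0] (· ^ 8) :=
    ((blendedMassSymbol_sub_taylor_isBigO τ).mul
      ((frequencyPolynomial_isEquivalent τ).isBigO.pow 2)).congr_right fun θ => by ring
  have hpoly : (fun θ : ℝ => (θ ^ 2 - θ ^ 4 / 4 + 11 * θ ^ 6 / 360) -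
      (1 - θ ^ 2 / 4 + (14 + τ) * θ ^ 4 / 480) * frequencyPolynomial τ θ ^ 2)
      =O[𝓝 0] (· ^ 8) := by
    refine (sub_mul_sq_add_mul_pow_five_isBigO (-1 / 4) ((14 + τ) / 480)
      ((2 - 3 * τ) / 2880)).congr_left fun θ => ?_
    rw [frequencyPolynomial]
    ring
  refine ((stiffnessSymbol_sub_taylor_isBigO.sub hmass).add hpoly).congr_left fun θ => ?_
  ring

theorem stiffnessSymbol_div_blendedMassSymbol_sub_sq_isBigO (τ : ℝ) :
    (fun θ => stiffnessSymbol θ / blendedMassSymbol τ θ - frequencyPolynomial τ θ ^ 2)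
      =O[𝓝 0] (· ^ 8) := by
  have hm := tendsto_blendedMassSymbol_zero τ
  refine ((stiffnessSymbol_sub_blendedMassSymbol_mul_sq_isBigO τ).mul
    ((hm.inv₀ one_ne_zero).isBigO_one ℝ)).congr' ?_ (.of_eq <| by simp)
  filter_upwards [hm.eventually_ne one_ne_zero] with θ hθ
  field_simp

theorem discreteFrequency_sub_frequencyPolynomial_isBigO (τ : ℝ) :
    (fun θ => discreteFrequency τ θ - frequencyPolynomial τ θ) =O[𝓝[>] 0] (· ^ 7) := by
  have hP := (frequencyPolynomial_isEquivalent τ).mono (nhdsWithin_le_nhds (s := Set.Ioi 0))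
  have hpos : ∀ᶠ θ in 𝓝[>] 0, 0 < frequencyPolynomial τ θ :=
    hP.eventually_pos self_mem_nhdsWithin
  refine isBigO_sqrt_sub_of_isBigO_sub_sq hpos ?_
  exact ((stiffnessSymbol_div_blendedMassSymbol_sub_sq_isBigO τ).mono nhdsWithin_le_nhds).trans
    (((isBigO_refl _ _).mul hP.symm.isBigO).congr_left fun θ => by ring)

/-- Dispersion expansion for the blended `C¹` quadratic isogeometric scheme
with blending parameter `τ` (mass matrix `M_τ = τ·M_GLL + (1 − τ)·M_G`):
with mass symbol `m_τ(θ) = τ(27 + 20cos θ + cos 2θ)/48 + (1 − τ)(33 + 26cos θ + cos 2θ)/60`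
and stiffness symbol `k(θ) = (3 − 2cos θ − cos 2θ)/3`, the discrete frequency
function `G_τ(θ) = √(k(θ)/m_τ(θ))` satisfies
`G_τ(θ) = θ + (2 − 3τ)θ⁵/2880 + O(θ⁷)` as `θ → 0`. -/
theorem iga_quadratic_blended_dispersion_expansion (τ : ℝ) :
    (fun θ : ℝ =>
        Real.sqrt (((3 - 2 * Real.cos θ - Real.cos (2 * θ)) / 3)
            / (τ * (27 + 20 * Real.cos θ + Real.cos (2 * θ)) / 48
                + (1 - τ) * (33 + 26 * Real.cos θ + Real.cos (2 * θ)) / 60))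
          - θ - (2 - 3 * τ) * θ ^ 5 / 2880)
      =O[𝓝[>] (0 : ℝ)] fun θ : ℝ => θ ^ 7 := by
  simpa only [discreteFrequency, frequencyPolynomial, stiffnessSymbol, blendedMassSymbol,
    lobattoMassSymbol, gaussMassSymbol, mul_div_assoc, sub_sub]
    using discreteFrequency_sub_frequencyPolynomial_isBigO τ
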